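/- arXiv:1503.06587 — 4 statements merged into one kernel-verified Lean document; each statement's English description precedes it below -/
import Mathlib

section
/- Let 0 ≤ ε < 1 and set r_ε = 1 − ε and t_ε = φ(r_ε). For every r ∈ [0, r_ε) and every t ∈ (t_ε, φ(r)), there exists a unique s > 1 such that s²·(φ(r/s) − φ(r_ε/s)) = t − t_ε. -/
noncomputable section

/-- The profile function `φ(r) = arccos r + r √(1 - r²)`. -/
def phi (r : ℝ) : ℝ := Real.arccos r + r * Real.sqrt (1 - r ^ 2)

/-!
Write `R = 1 - ε`. Since `φ'(x) = -2x² / √(1 - x²)`, the rescaled profile `y ↦ s² φ(y/s)` has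
derivative `-2y² / √(s² - y²)`, so that formally
`s² (φ(r/s) - φ(R/s)) = ∫_r^R 2y² / √(s² - y²) dy`.
The right-hand side is strictly decreasing in `s`, equals `φ(r) - φ(R)` at `s = 1`, and tends to
`0` as `s → ∞`; the intermediate value theorem gives existence and strict monotonicity gives
uniqueness. Instead of the integral, the proof uses the sign of derivatives in `y`: strict
monotonicity in `s` (`leaf_lt`) comes from comparing two rescaled profiles, and the decay
(`leaf_le`) from comparing one of them with a linear function.
-/

theorem phi_continuous : Continuous phi := by
  unfold phi
  fun_prop

theorem phi_hasDerivAt {x : ℝ} (h1 : -1 < x) (h2 : x < 1) :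
    HasDerivAt phi (-(2 * x ^ 2) / Real.sqrt (1 - x ^ 2)) x := by
  have hpos : 0 < 1 - x ^ 2 := by nlinarith
  have hs : 0 < Real.sqrt (1 - x ^ 2) := Real.sqrt_pos.2 hpos
  have hsq := Real.sq_sqrt hpos.le
  have ha := Real.hasDerivAt_arccos h1.ne' h2.ne
  have hb := (((hasDerivAt_id x).pow 2).const_sub 1).sqrt hpos.ne'
  have hc := ha.add ((hasDerivAt_id x).mul hb)
  refine hc.congr_deriv ?_
  simp only [id, Pi.pow_apply]
  field_simp
  rw [hsq]
  push_cast
  ring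

theorem scaled_phi_hasDerivAt {s y : ℝ} (h0 : 0 ≤ y) (h : y < s) :
    HasDerivAt (fun y => s ^ 2 * phi (y / s)) (-(2 * y ^ 2) / Real.sqrt (s ^ 2 - y ^ 2)) y := by
  have hs : 0 < s := h0.trans_lt h
  have h1 : y / s < 1 := (div_lt_one hs).2 h
  have h2 : -1 < y / s := by
    have : 0 ≤ y / s := by positivity
    linarith
  have hd := ((phi_hasDerivAt h2 h1).comp y ((hasDerivAt_id y).div_const s)).const_mul (s ^ 2)
  refine hd.congr_deriv ?_
  have hq : Real.sqrt (s ^ 2 - y ^ 2) = s * Real.sqrt (1 - (y / s) ^ 2) := by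
    rw [show s ^ 2 - y ^ 2 = s ^ 2 * (1 - (y / s) ^ 2) by field_simp,
      Real.sqrt_mul (sq_nonneg s), Real.sqrt_sq hs.le]
  have hp : 0 < Real.sqrt (1 - (y / s) ^ 2) := by
    apply Real.sqrt_pos.2
    nlinarith
  rw [hq]
  generalize Real.sqrt (1 - (y / s) ^ 2) = q at *
  field_simp

theorem scaled_phi_continuous (s : ℝ) : Continuous (fun y => s ^ 2 * phi (y / s)) :=
  continuous_const.mul (phi_continuous.comp (continuous_id.div_const s))

/-- The left-hand side of the leaf equation is strictly decreasing in `s`: for `s < u` the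
difference of the two rescaled profiles is strictly decreasing in `y`. -/
theorem leaf_lt {r R s u : ℝ} (hr0 : 0 ≤ r) (hr : r < R) (hs : R ≤ s) (hu : s < u) :
    u ^ 2 * (phi (r / u) - phi (R / u)) < s ^ 2 * (phi (r / s) - phi (R / s)) := by
  have hanti : StrictAntiOn (fun y => s ^ 2 * phi (y / s) - u ^ 2 * phi (y / u))
      (Set.Icc 0 R) := by
    apply strictAntiOn_of_deriv_neg (convex_Icc 0 R)
    · exact ((scaled_phi_continuous s).sub (scaled_phi_continuous u)).continuousOn
    · intro y hy
      rw [interior_Icc] at hy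
      obtain ⟨hy0, hyR⟩ := hy
      have hd := (scaled_phi_hasDerivAt hy0.le (hyR.trans_le hs)).sub
        (scaled_phi_hasDerivAt hy0.le ((hyR.trans_le hs).trans hu))
      refine (HasDerivAt.deriv hd).trans_lt ?_
      have hp : 0 < s ^ 2 - y ^ 2 := by nlinarith
      have hlt : Real.sqrt (s ^ 2 - y ^ 2) < Real.sqrt (u ^ 2 - y ^ 2) :=
        Real.sqrt_lt_sqrt hp.le (by nlinarith)
      have := div_lt_div_of_pos_left (show 0 < 2 * y ^ 2 by positivity)
        (Real.sqrt_pos.2 hp) hlt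
      rw [neg_div, neg_div]
      linarith
  have := hanti ⟨hr0, hr.le⟩ ⟨hr0.trans hr.le, le_rfl⟩ hr
  simp only at this
  linarith

/-- Decay of the left-hand side of the leaf equation as `s → ∞`: for `y ≤ 1` and `s ≥ 2` the
derivative of the rescaled profile is at least `-4 / s`. -/
theorem leaf_le {r R s : ℝ} (hr0 : 0 ≤ r) (hr : r < R) (hR : R ≤ 1) (hs : 2 ≤ s) :
    s ^ 2 * (phi (r / s) - phi (R / s)) ≤ 4 / s := by
  have hs0 : 0 < s := by linarith
  have hmono : MonotoneOn (fun y => s ^ 2 * phi (y / s) + y * (4 / s)) (Set.Icc 0 R) := by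
    have hd : ∀ y ∈ interior (Set.Icc 0 R),
        HasDerivAt (fun y => s ^ 2 * phi (y / s) + y * (4 / s))
          (-(2 * y ^ 2) / Real.sqrt (s ^ 2 - y ^ 2) + 1 * (4 / s)) y := by
      intro y hy
      rw [interior_Icc] at hy
      exact (scaled_phi_hasDerivAt hy.1.le (by linarith [hy.2])).add
        ((hasDerivAt_id y).mul_const _)
    apply monotoneOn_of_deriv_nonneg (convex_Icc 0 R)
    · exact ((scaled_phi_continuous s).add (continuous_id.mul_const _)).continuousOn
    · intro y hy
      exact (hd y hy).differentiableAt.differentiableWithinAt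
    · intro y hy
      rw [(hd y hy).deriv]
      rw [interior_Icc] at hy
      obtain ⟨hy0, hyR⟩ := hy
      have hle : s / 2 ≤ Real.sqrt (s ^ 2 - y ^ 2) := by
        apply Real.le_sqrt_of_sq_le
        nlinarith
      have h2 : 2 * y ^ 2 / Real.sqrt (s ^ 2 - y ^ 2) ≤ 2 / (s / 2) :=
        div_le_div₀ (by norm_num) (by nlinarith) (by positivity) hle
      have h3 : 2 / (s / 2) = 4 / s := by
        field_simp
        norm_num
      rw [neg_div]
      linarith
  have h := hmono ⟨hr0, hr.le⟩ ⟨hr0.trans hr.le, le_rfl⟩ hr.le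
  simp only at h
  have h4 : (R - r) * (4 / s) ≤ 1 * (4 / s) := by
    gcongr
    linarith
  linarith

/-- Existence and uniqueness of the parameter `s > 1` of the leaf of the
sub-calibrating foliation through a point `(z,t)` with `|z| = r` and
`t_ε < t < φ(r)`. -/
theorem exists_unique_leaf_parameter (ε : ℝ) (hε0 : 0 ≤ ε) (hε1 : ε < 1)
    (r : ℝ) (hr0 : 0 ≤ r) (hr : r < 1 - ε)
    (t : ℝ) (ht0 : phi (1 - ε) < t) (ht1 : t < phi r) :
    ∃! s : ℝ, 1 < s ∧ s ^ 2 * (phi (r / s) - phi ((1 - ε) / s)) = t - phi (1 - ε) := by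
  have hR : 1 - ε ≤ 1 := by linarith
  generalize 1 - ε = R at *
  set δ := t - phi R with hδ
  have hδ0 : 0 < δ := by linarith
  obtain ⟨S, hS2, hSδ⟩ : ∃ S : ℝ, 2 ≤ S ∧ 4 / S ≤ δ := by
    refine ⟨max 2 (4 / δ), le_max_left _ _, ?_⟩
    rw [div_le_comm₀ (by positivity) hδ0]
    exact le_max_right _ _
  have hcont : ContinuousOn (fun s => s ^ 2 * (phi (r / s) - phi (R / s))) (Set.Icc 1 S) := by
    have hdiv : ∀ c : ℝ, ContinuousOn (fun s : ℝ => phi (c / s)) (Set.Icc 1 S) := fun c =>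
      phi_continuous.comp_continuousOn (continuousOn_const.div continuousOn_id
        fun s hs => (zero_lt_one.trans_le hs.1).ne')
    exact (continuousOn_id.pow 2).mul ((hdiv r).sub (hdiv R))
  have hmem : δ ∈ Set.Icc (S ^ 2 * (phi (r / S) - phi (R / S)))
      ((1 : ℝ) ^ 2 * (phi (r / 1) - phi (R / 1))) := by
    refine ⟨(leaf_le hr0 hr hR hS2).trans hSδ, ?_⟩
    simp only [div_one]
    linarith
  obtain ⟨s, hs, hsδ⟩ := intermediate_value_Icc' (by linarith) hcont hmem
  simp only at hsδ
  have hs1 : 1 < s := by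
    -- At `s = 1` the left-hand side is `φ(r) - φ(R)`, which exceeds `δ` because `t < φ(r)`.
    refine lt_of_le_of_ne hs.1 ?_
    rintro rfl
    simp only [div_one] at hsδ
    linarith
  refine ⟨s, ⟨hs1, hsδ⟩, ?_⟩
  rintro u ⟨hu1, huδ⟩
  rcases lt_trichotomy u s with h | h | h
  · linarith [leaf_lt hr0 hr (hR.trans hu1.le) h]
  · exact h
  · linarith [leaf_lt hr0 hr (hR.trans hs1.le) h]
end
end

section
/- Let 0 ≤ a < b ≤ 1. The function G(s) = s²·(φ(a/s) − φ(b/s)) is differentiable on (1, ∞) with G'(s) = s·(ψ(a/s) − ψ(b/s)); moreover G'(s) < 0 for every s > 1, so G is strictly decreasing on (1, ∞). -/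
/-!
Write `√` for `√(1 - r²)`. On `(-1, 1)` one computes `φ' = -2r²/√`, so for fixed `c` the chain rule
gives `d/ds (s² φ(c/s)) = 2 s φ(r) + 2 s r³/√ = s ψ(r)` at `r = c/s`; the formula for `G'` is the
difference of the cases `c = a` and `c = b`. Since `ψ' = 2r²/√³ > 0` on `(0, 1)`, `ψ` is strictly
increasing on `[0, 1)`, which makes `G'` negative because `0 ≤ a/s < b/s < 1` for `s > 1`.
-/

noncomputable section

/-- `ψ(r) = 2 (r/√(1-r²) + arccos r)`. -/
def psi (r : ℝ) : ℝ := 2 * (r / Real.sqrt (1 - r ^ 2) + Real.arccos r)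

lemma hasDerivAt_sqrt_one_sub_sq {r : ℝ} (h : 0 < 1 - r ^ 2) :
    HasDerivAt (fun r : ℝ => √(1 - r ^ 2)) (-r / √(1 - r ^ 2)) r := by
  have h1 : HasDerivAt (fun r : ℝ => 1 - r ^ 2) (-(2 * r)) r := by
    simpa using (hasDerivAt_pow 2 r).const_sub 1
  refine (h1.sqrt h.ne').congr_deriv ?_
  have := (Real.sqrt_pos.2 h).ne'
  field_simp

lemma hasDerivAt_phi {r : ℝ} (h0 : -1 < r) (h1 : r < 1) :
    HasDerivAt phi (-2 * r ^ 2 / √(1 - r ^ 2)) r := by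
  have h : 0 < 1 - r ^ 2 := by nlinarith
  have hq := (Real.sqrt_pos.2 h).ne'
  have hs := Real.sq_sqrt h.le
  refine ((Real.hasDerivAt_arccos h0.ne' h1.ne).add
    ((hasDerivAt_id' r).mul (hasDerivAt_sqrt_one_sub_sq h))).congr_deriv ?_
  field_simp
  linear_combination hs

lemma hasDerivAt_psi {r : ℝ} (h0 : -1 < r) (h1 : r < 1) :
    HasDerivAt psi (2 * r ^ 2 / √(1 - r ^ 2) ^ 3) r := by
  have h : 0 < 1 - r ^ 2 := by nlinarith
  have hq := (Real.sqrt_pos.2 h).ne'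
  refine ((((hasDerivAt_id' r).div (hasDerivAt_sqrt_one_sub_sq h) hq).add
    (Real.hasDerivAt_arccos h0.ne' h1.ne)).const_mul 2).congr_deriv ?_
  field_simp
  ring

lemma psi_strictMonoOn : StrictMonoOn psi (Set.Ico 0 1) := by
  refine strictMonoOn_of_deriv_pos (convex_Ico 0 1) (fun r hr => ?_) (fun r hr => ?_)
  · exact (hasDerivAt_psi (by linarith [hr.1]) hr.2).continuousAt.continuousWithinAt
  · rw [interior_Ico] at hr
    have h : 0 < 1 - r ^ 2 := by nlinarith [hr.1, hr.2]
    rw [(hasDerivAt_psi (by linarith [hr.1]) hr.2).deriv]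
    have := Real.sqrt_pos.2 h
    have := hr.1
    positivity

lemma hasDerivAt_sq_mul_phi_div {c s : ℝ} (hs : s ≠ 0) (h0 : -1 < c / s) (h1 : c / s < 1) :
    HasDerivAt (fun s : ℝ => s ^ 2 * phi (c / s)) (s * psi (c / s)) s := by
  have h : 0 < 1 - (c / s) ^ 2 := by nlinarith
  have hq := (Real.sqrt_pos.2 h).ne'
  have hsq := Real.sq_sqrt h.le
  have hd : HasDerivAt (fun s : ℝ => c / s) (-c / s ^ 2) s := by
    simpa using (hasDerivAt_const s c).fun_div (hasDerivAt_id' s) hs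
  refine ((hasDerivAt_pow 2 s).mul ((hasDerivAt_phi h0 h1).comp s hd)).congr_deriv ?_
  obtain ⟨r, rfl⟩ : ∃ r, c = r * s := ⟨c / s, by field_simp⟩
  have hr : r * s / s = r := by field_simp
  simp only [Function.comp_apply, hr, phi, psi] at *
  field_simp
  push_cast
  linear_combination 2 * s * r * hsq

/-- For `0 ≤ a < b ≤ 1`, the function `G(s) = s² (φ(a/s) - φ(b/s))` is
differentiable on `(1,∞)` with `G'(s) = s (ψ(a/s) - ψ(b/s)) < 0`; hence `G` is
strictly decreasing on `(1,∞)`. -/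
theorem leaf_function_deriv_neg (a b : ℝ) (ha : 0 ≤ a) (hab : a < b) (hb : b ≤ 1) :
    (∀ s ∈ Set.Ioi (1 : ℝ),
        HasDerivAt (fun s : ℝ => s ^ 2 * (phi (a / s) - phi (b / s)))
          (s * (psi (a / s) - psi (b / s))) s
        ∧ s * (psi (a / s) - psi (b / s)) < 0)
    ∧ StrictAntiOn (fun s : ℝ => s ^ 2 * (phi (a / s) - phi (b / s)))
        (Set.Ioi (1 : ℝ)) := by
  have key : ∀ s ∈ Set.Ioi (1 : ℝ),
      HasDerivAt (fun s : ℝ => s ^ 2 * (phi (a / s) - phi (b / s)))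
        (s * (psi (a / s) - psi (b / s))) s ∧ s * (psi (a / s) - psi (b / s)) < 0 := by
    intro s hs
    have hs1 : 1 < s := hs
    have hs0 : 0 < s := by linarith
    have ha0 : 0 ≤ a / s := by positivity
    have hlt : a / s < b / s := by gcongr
    have hb1 : b / s < 1 := by rw [div_lt_one hs0]; linarith
    refine ⟨?_, mul_neg_of_pos_of_neg hs0 (sub_neg.2 (psi_strictMonoOn ⟨ha0, hlt.trans hb1⟩
      ⟨ha0.trans hlt.le, hb1⟩ hlt))⟩
    simpa only [mul_sub] using
      (hasDerivAt_sq_mul_phi_div hs0.ne' (by linarith) (by linarith)).fun_sub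
        (hasDerivAt_sq_mul_phi_div hs0.ne' (by linarith) hb1)
  refine ⟨key, strictAntiOn_of_deriv_neg (convex_Ioi 1)
    (fun s hs => (key s hs).1.continuousAt.continuousWithinAt) (fun s hs => ?_)⟩
  rw [interior_Ioi] at hs
  rw [(key s hs).1.deriv]
  exact (key s hs).2
end
end

section
/- For every b with 0 < b ≤ 1 and every s > 1, one has s·(ψ(b/s) − π) ≤ 2/√(s − b). -/
/-!
Put `r = b / s`. Since `arccos r - π / 2 = -arcsin r` and `arcsin r ≥ r`, half of the left-hand side
is at most `s (r / √(1 - r²) - r)`. With `u = √(s - b)` and `v = √(s + b)` one has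
`√(1 - r²) = u v / s`, so the claim reduces to `b (s - u v) ≤ v`. This holds because `b ≤ 1 ≤ v` and
`s - u v ≤ 1`, the latter being `(s - 1)² ≤ s² - b²`.
-/

noncomputable section

/-- For `0 < b ≤ 1` and `s > 1`, `s (ψ(b/s) - π) ≤ 2/√(s - b)`. -/
theorem psi_key_estimate (b : ℝ) (hb0 : 0 < b) (hb1 : b ≤ 1)
    (s : ℝ) (hs : 1 < s) :
    s * (psi (b / s) - Real.pi) ≤ 2 / Real.sqrt (s - b) := by
  have hs0 : 0 < s := by linarith
  have hr0 : 0 ≤ b / s := by positivity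
  have hr1 : b / s ≤ 1 := by rw [div_le_one hs0]; linarith
  have harc : b / s ≤ Real.arcsin (b / s) := by
    have h := Real.sin_le (Real.arcsin_nonneg.2 hr0)
    rwa [Real.sin_arcsin (by linarith) hr1] at h
  have hc : Real.sqrt (1 - (b / s) ^ 2) = Real.sqrt (s - b) * Real.sqrt (s + b) / s := by
    rw [← Real.sqrt_mul (by linarith), ← Real.sqrt_sq hs0.le, ← Real.sqrt_div' _ (sq_nonneg s),
      Real.sqrt_sq hs0.le]
    congr 1
    field_simp
    ring
  have huv : s - 1 ≤ Real.sqrt (s - b) * Real.sqrt (s + b) := by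
    rw [← Real.sqrt_mul (by linarith)]
    apply Real.le_sqrt_of_sq_le
    nlinarith
  have hv : 1 ≤ Real.sqrt (s + b) := Real.one_le_sqrt.2 (by linarith)
  have hu : 0 < Real.sqrt (s - b) := Real.sqrt_pos.2 (by linarith)
  unfold psi
  rw [hc, Real.arccos_eq_pi_div_two_sub_arcsin]
  generalize Real.sqrt (s - b) = u at *
  generalize Real.sqrt (s + b) = v at *
  have hv0 : 0 < v := by linarith
  have hmain : s * (b / s / (u * v / s) - b / s) ≤ 1 / u := by
    have e : s * (b / s / (u * v / s) - b / s) = b * (s - u * v) / (u * v) := by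
      field_simp
    rw [e, div_le_div_iff₀ (by positivity) hu]
    have : b * (s - u * v) ≤ v := by nlinarith
    nlinarith
  have hle := mul_le_mul_of_nonneg_left harc hs0.le
  have e2 : 2 / u = 2 * (1 / u) := by ring
  rw [e2]
  linarith
end
end

section
/- Fix n ≥ 1 and s > 0. On the open set Ω = {(x,y) ∈ ℝⁿ×ℝⁿ : 0 < r < s}, where r = |(x,y)| is the Euclidean norm, define the vector field V : Ω → ℝ^{2n} by V_j(x,y) = x_j/s + y_j·√(s²−r²)/(r s) and V_{n+j}(x,y) = y_j/s − x_j·√(s²−r²)/(r s) for j = 1,…,n. Then V is of class C¹ on Ω, |V(x,y)| = 1 for every (x,y) ∈ Ω, and Σ_{j=1}^n (∂_{x_j}V_j + ∂_{y_j}V_{n+j}) = 2n/s at every point of Ω. -/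
/-!
Write `q = r²` and `g = √(s² - r²)/(r s) = φ(q)` with `φ t = √(s² - t)/(√t s)`, which is smooth for
`0 < t < s²`. Then `V = z/s + g J z`, where `J (x, y) = (y, -x)`. Smoothness of `V` is that of `φ`
and `q`. Since `J` is a rotation with `J z ⊥ z`, `|V|² = r² (1/s² + g²) = 1`. For the divergence,
`z/s` contributes `2n/s`, while `g J z` contributes nothing: `J` is trace free and `∇g` is a
multiple of `z`, hence orthogonal to `J z`.
-/

noncomputable section

/-- Euclidean norm of `z = (x,y) ∈ ℝⁿ × ℝⁿ`. -/
def rad {n : ℕ} (z : (Fin n → ℝ) × (Fin n → ℝ)) : ℝ :=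
  Real.sqrt (∑ j, ((z.1 j) ^ 2 + (z.2 j) ^ 2))

/-- The vector field `V` on `Ω = {0 < r < s}` given by
`V_j = x_j/s + y_j √(s²-r²)/(r s)`, `V_{n+j} = y_j/s - x_j √(s²-r²)/(r s)`. -/
def calVF (n : ℕ) (s : ℝ) (z : (Fin n → ℝ) × (Fin n → ℝ)) :
    (Fin n → ℝ) × (Fin n → ℝ) :=
  (fun j => z.1 j / s + z.2 j * Real.sqrt (s ^ 2 - rad z ^ 2) / (rad z * s),
   fun j => z.2 j / s - z.1 j * Real.sqrt (s ^ 2 - rad z ^ 2) / (rad z * s))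

/-- The squared Euclidean norm `|x|² + |y|²`. -/
def radSq {n : ℕ} (z : (Fin n → ℝ) × (Fin n → ℝ)) : ℝ :=
  ∑ j, ((z.1 j) ^ 2 + (z.2 j) ^ 2)

/-- The coefficient `√(s² - r²)/(r s)` of the rotational part of `V`, as a function of `t = r²`. -/
def rotProfile (s t : ℝ) : ℝ :=
  Real.sqrt (s ^ 2 - t) / (Real.sqrt t * s)

lemma rad_sq {n : ℕ} (z : (Fin n → ℝ) × (Fin n → ℝ)) : rad z ^ 2 = radSq z :=
  Real.sq_sqrt (Finset.sum_nonneg fun _ _ => by positivity)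

lemma calVF_eq (n : ℕ) (s : ℝ) : calVF n s = fun z =>
    (fun j => s⁻¹ * z.1 j + z.2 j * rotProfile s (radSq z),
     fun j => s⁻¹ * z.2 j - z.1 j * rotProfile s (radSq z)) := by
  funext z
  have h : Real.sqrt (s ^ 2 - rad z ^ 2) / (rad z * s) = rotProfile s (radSq z) := by
    rw [rad_sq]; rfl
  simp only [calVF, mul_div_assoc, h, inv_mul_eq_div]

lemma contDiffAt_rotProfile {s t : ℝ} (hs : 0 < s) (ht : 0 < t) (hts : t < s ^ 2) :
    ContDiffAt ℝ 1 (rotProfile s) t := by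
  unfold rotProfile
  refine ContDiffAt.div (ContDiffAt.sqrt (by fun_prop) (by linarith))
    (ContDiffAt.mul (ContDiffAt.sqrt contDiffAt_id ht.ne') contDiffAt_const) ?_
  have := Real.sqrt_pos.2 ht
  positivity

lemma contDiff_radSq {n : ℕ} : ContDiff ℝ 1 (radSq (n := n)) := by
  unfold radSq
  fun_prop

/-- The partial derivatives of `r²` are `2 x_j` and `2 y_j`. -/
lemma fderiv_radSq {n : ℕ} (z : (Fin n → ℝ) × (Fin n → ℝ)) (j : Fin n) :
    fderiv ℝ radSq z (Pi.single j 1, 0) = 2 * z.1 j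
    ∧ fderiv ℝ radSq z (0, Pi.single j 1) = 2 * z.2 j := by
  have hX (i : Fin n) := ((ContinuousLinearMap.proj (R := ℝ) (φ := fun _ : Fin n => ℝ) i).comp
    (ContinuousLinearMap.fst ℝ (Fin n → ℝ) (Fin n → ℝ))).hasFDerivAt (x := z)
  have hY (i : Fin n) := ((ContinuousLinearMap.proj (R := ℝ) (φ := fun _ : Fin n => ℝ) i).comp
    (ContinuousLinearMap.snd ℝ (Fin n → ℝ) (Fin n → ℝ))).hasFDerivAt (x := z)
  have h := HasFDerivAt.fun_sum (u := Finset.univ)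
    (fun (i : Fin n) _ => ((hX i).pow 2).add ((hY i).pow 2))
  have h' : fderiv ℝ radSq z = _ := HasFDerivAt.fderiv h
  rw [h']
  constructor <;> simp [Pi.single_apply]

/-- The two diagonal derivatives of `V` at the index `j`: the terms containing the derivative `c` of
the profile are opposite to each other. -/
lemma fderiv_calVF {n : ℕ} {s : ℝ} (z : (Fin n → ℝ) × (Fin n → ℝ)) {c : ℝ}
    (hc : HasDerivAt (rotProfile s) c (radSq z)) (j : Fin n) :
    (fderiv ℝ (calVF n s) z (Pi.single j 1, 0)).1 j = s⁻¹ + z.2 j * (c * (2 * z.1 j))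
    ∧ (fderiv ℝ (calVF n s) z (0, Pi.single j 1)).2 j = s⁻¹ - z.1 j * (c * (2 * z.2 j)) := by
  have hX (i : Fin n) := ((ContinuousLinearMap.proj (R := ℝ) (φ := fun _ : Fin n => ℝ) i).comp
    (ContinuousLinearMap.fst ℝ (Fin n → ℝ) (Fin n → ℝ))).hasFDerivAt (x := z)
  have hY (i : Fin n) := ((ContinuousLinearMap.proj (R := ℝ) (φ := fun _ : Fin n => ℝ) i).comp
    (ContinuousLinearMap.snd ℝ (Fin n → ℝ) (Fin n → ℝ))).hasFDerivAt (x := z)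
  have hg := hc.comp_hasFDerivAt z
    ((contDiff_radSq (n := n)).differentiable one_ne_zero z).hasFDerivAt
  have h := (hasFDerivAt_pi.2 fun i => ((hX i).const_mul s⁻¹).add ((hY i).mul hg)).prodMk
    (hasFDerivAt_pi.2 fun i => ((hY i).const_mul s⁻¹).sub ((hX i).mul hg))
  have h' : fderiv ℝ (calVF n s) z = _ :=
    (congrArg (fun F => fderiv ℝ F z) (calVF_eq n s)).trans (HasFDerivAt.fderiv h)
  rw [h']
  constructor <;> simp [fderiv_radSq]

/-- On `Ω = {0 < r < s}`, the field `V` is `C¹`, has unit (Euclidean) length,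
and has Euclidean divergence `Σ_j (∂_{x_j}V_j + ∂_{y_j}V_{n+j}) = 2n/s`:
the leaves of the sub-calibrating foliation have constant `H`-mean
curvature `1/s`. -/
theorem calibration_field_divergence (n : ℕ) (hn : 1 ≤ n) (s : ℝ) (hs : 0 < s) :
    ContDiffOn ℝ 1 (calVF n s) {z | 0 < rad z ∧ rad z < s}
    ∧ (∀ z ∈ {z : (Fin n → ℝ) × (Fin n → ℝ) | 0 < rad z ∧ rad z < s},
        ∑ j, (((calVF n s z).1 j) ^ 2 + ((calVF n s z).2 j) ^ 2) = 1)
    ∧ (∀ z ∈ {z : (Fin n → ℝ) × (Fin n → ℝ) | 0 < rad z ∧ rad z < s},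
        ∑ j : Fin n,
          ((fderiv ℝ (calVF n s) z (Pi.single j 1, 0)).1 j
            + (fderiv ℝ (calVF n s) z (0, Pi.single j 1)).2 j) = 2 * n / s) := by
  have hpos : ∀ z ∈ {z : (Fin n → ℝ) × (Fin n → ℝ) | 0 < rad z ∧ rad z < s},
      0 < radSq z ∧ radSq z < s ^ 2 := by
    rintro z ⟨h0, h1⟩
    rw [← rad_sq]
    exact ⟨by positivity, by gcongr⟩
  refine ⟨fun z hz => ContDiffAt.contDiffWithinAt ?_, fun z hz => ?_, fun z hz => ?_⟩
  · obtain ⟨h0, h1⟩ := hpos z hz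
    have hg : ContDiffAt ℝ 1 (fun z => rotProfile s (radSq z)) z :=
      (contDiffAt_rotProfile hs h0 h1).comp z contDiff_radSq.contDiffAt
    rw [calVF_eq]
    refine ContDiffAt.prodMk (contDiffAt_pi.2 fun j => ?_) (contDiffAt_pi.2 fun j => ?_) <;>
      fun_prop
  · obtain ⟨h0, h1⟩ := hpos z hz
    have hg : radSq z * (s⁻¹ ^ 2 + rotProfile s (radSq z) ^ 2) = 1 := by
      rw [rotProfile, div_pow, mul_pow, Real.sq_sqrt (by linarith), Real.sq_sqrt h0.le]
      field_simp
      ring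
    rw [← hg, calVF_eq, radSq, Finset.sum_mul]
    refine Finset.sum_congr rfl fun j _ => ?_
    simp only [radSq]
    ring
  · obtain ⟨h0, h1⟩ := hpos z hz
    have hc := ((contDiffAt_rotProfile hs h0 h1).differentiableAt one_ne_zero).hasDerivAt
    have h (j : Fin n) := fderiv_calVF z hc j
    have h2 (j : Fin n) : (fderiv ℝ (calVF n s) z (Pi.single j 1, 0)).1 j
        + (fderiv ℝ (calVF n s) z (0, Pi.single j 1)).2 j = 2 / s := by
      rw [(h j).1, (h j).2]
      ring
    simp only [h2, Finset.sum_const, Finset.card_univ, Fintype.card_fin, nsmul_eq_mul]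
    ring
end
end
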